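/- Let S > 0, 0 < δ₁ < S, δ₂ > 0, r > 0, κ₀ ≥ 0. Let χ : [0,S] × ∂Ω → [0,∞) be continuous with χ(t,x) = δ₂ for all (t,x) ∈ [δ₁,S] × ∂Ω. Let F : [0,S] × cl(Ω) × ℝ → ℝ be continuous, twice continuously differentiable in the last variable, with: F(t,x,0) = 0; ∂²_uF(t,x,u) ≤ 0 for u ≥ 0 and ∂²_uF(t,x,u) ≥ 0 for u ≤ 0; and ∂_uF(t,x,0) ≤ κ₀ for all (t,x). Suppose that for each λ ∈ [−r,r] there are functions v_λ, v⁽¹⁾_λ, v⁽²⁾_λ : [0,S] × cl(Ω) → ℝ such that, setting V_λ(t,x) := ∂_uF(t,x,v_λ(t,x)): v_λ is a classical solution of ∂_t v − Δv + F(t,x,v) = 0 in (0,S) × Ω with lateral boundary values λχ and zero initial values, v_0 ≡ 0; v⁽¹⁾_λ is a classical solution of ∂_t u − Δu + V_λ u = 0 with lateral boundary values χ and zero initial values; v⁽²⁾_λ is a classical solution of ∂_t u − Δu + V_λ u = −∂²_uF(t,x,v_λ(t,x)) (v⁽¹⁾_λ(t,x))² with zero lateral boundary values and zero initial values; and for each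 (t,x), λ ↦ v_λ(t,x) is continuous on [−r,r] and differentiable on (−r,r) with derivative v⁽¹⁾_λ(t,x), and λ ↦ v⁽¹⁾_λ(t,x) is differentiable on (−r,r) with derivative v⁽²⁾_λ(t,x). Let y be a classical solution of ∂_t y − Δy + κ₀ y = 0 in (0,S) × Ω with lateral boundary values χ and zero initial values, and set a₂ := inf { y(t,x) : (t,x) ∈ [δ₁,S] × cl(Ω) }. Then a₂ > 0 and, for every (t,x) ∈ (δ₁,S) × Ω and every s ∈ [−a₂ r, a₂ r], there exists λ ∈ [−r,r] such that v_λ(t,x) = s. -/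

import Mathlib

open Set

namespace Paper

noncomputable section

/-- Time derivative `∂ₜu`. -/
def timeDeriv {n : ℕ} (u : ℝ → (Fin n → ℝ) → ℝ) (t : ℝ) (x : Fin n → ℝ) : ℝ :=
  deriv (fun s => u s x) t

/-- Spatial partial derivative `∂ᵢu`. -/
def spatialDeriv {n : ℕ} (u : ℝ → (Fin n → ℝ) → ℝ) (i : Fin n) (t : ℝ) (x : Fin n → ℝ) : ℝ :=
  deriv (fun s => u t (Function.update x i s)) (x i)

/-- Second spatial partial derivative `∂ᵢ∂ⱼu`. -/
def spatialDeriv2 {n : ℕ} (u : ℝ → (Fin n → ℝ) → ℝ) (i j : Fin n) (t : ℝ)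
    (x : Fin n → ℝ) : ℝ :=
  spatialDeriv (spatialDeriv u j) i t x

/-- Laplacian in the space variables. -/
def laplacian {n : ℕ} (u : ℝ → (Fin n → ℝ) → ℝ) (t : ℝ) (x : Fin n → ℝ) : ℝ :=
  ∑ i, spatialDeriv2 u i i t x

/-- Parabolic regularity: `u` is continuous on `[0,S] × cl Ω`, and `∂ₜu` together with all
spatial partial derivatives of `u` up to order 2 exist and are continuous on `(0,S) × Ω`. -/
structure ParabolicRegular {n : ℕ} (Ω : Set (Fin n → ℝ)) (S : ℝ)
    (u : ℝ → (Fin n → ℝ) → ℝ) : Prop where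
  cont : ContinuousOn (fun p : ℝ × (Fin n → ℝ) => u p.1 p.2) (Icc 0 S ×ˢ closure Ω)
  diff_t : ∀ t ∈ Ioo 0 S, ∀ x ∈ Ω, DifferentiableAt ℝ (fun s => u s x) t
  diff_x : ∀ t ∈ Ioo 0 S, ∀ x ∈ Ω, ∀ i,
    DifferentiableAt ℝ (fun s => u t (Function.update x i s)) (x i)
  diff_xx : ∀ t ∈ Ioo 0 S, ∀ x ∈ Ω, ∀ i j,
    DifferentiableAt ℝ (fun s => spatialDeriv u j t (Function.update x i s)) (x i)
  cont_t : ContinuousOn (fun p : ℝ × (Fin n → ℝ) => timeDeriv u p.1 p.2) (Ioo 0 S ×ˢ Ω)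
  cont_x : ∀ i, ContinuousOn (fun p : ℝ × (Fin n → ℝ) => spatialDeriv u i p.1 p.2)
    (Ioo 0 S ×ˢ Ω)
  cont_xx : ∀ i j, ContinuousOn (fun p : ℝ × (Fin n → ℝ) => spatialDeriv2 u i j p.1 p.2)
    (Ioo 0 S ×ˢ Ω)

/-- Classical solution of `∂ₜu − Δu + c u = f` in `(0,S) × Ω` with lateral boundary values `g`
and zero initial values. -/
structure IsClassicalSolution {n : ℕ} (Ω : Set (Fin n → ℝ)) (S : ℝ)
    (c f g u : ℝ → (Fin n → ℝ) → ℝ) extends ParabolicRegular Ω S u : Prop where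
  eqn : ∀ t ∈ Ioo 0 S, ∀ x ∈ Ω, timeDeriv u t x - laplacian u t x + c t x * u t x = f t x
  lateral : ∀ t ∈ Icc 0 S, ∀ x ∈ frontier Ω, u t x = g t x
  initial : ∀ x ∈ closure Ω, u 0 x = 0

/-- `∂_u F` for a semilinear term `F(t,x,u)`. -/
def uDeriv {n : ℕ} (F : ℝ → (Fin n → ℝ) → ℝ → ℝ) (t : ℝ) (x : Fin n → ℝ) (u : ℝ) : ℝ :=
  deriv (F t x) u

/-- `∂_u² F`. -/
def uDeriv2 {n : ℕ} (F : ℝ → (Fin n → ℝ) → ℝ → ℝ) : ℝ → (Fin n → ℝ) → ℝ → ℝ :=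
  uDeriv (uDeriv F)

/-- `∂_u³ F`. -/
def uDeriv3 {n : ℕ} (F : ℝ → (Fin n → ℝ) → ℝ → ℝ) : ℝ → (Fin n → ℝ) → ℝ → ℝ :=
  uDeriv (uDeriv2 F)

/-- `∂_u⁴ F`. -/
def uDeriv4 {n : ℕ} (F : ℝ → (Fin n → ℝ) → ℝ → ℝ) : ℝ → (Fin n → ℝ) → ℝ → ℝ :=
  uDeriv (uDeriv3 F)

/-- `∂ₜF` for `F` depending on `(t,x,u)`. -/
def FtDeriv {n : ℕ} (F : ℝ → (Fin n → ℝ) → ℝ → ℝ) (t : ℝ) (x : Fin n → ℝ) (u : ℝ) : ℝ :=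
  deriv (fun s => F s x u) t

/-- `∂_{xᵢ}F` for `F` depending on `(t,x,u)`. -/
def FxDeriv {n : ℕ} (F : ℝ → (Fin n → ℝ) → ℝ → ℝ) (i : Fin n) (t : ℝ) (x : Fin n → ℝ)
    (u : ℝ) : ℝ :=
  deriv (fun s => F t (Function.update x i s) u) (x i)

/-- `F` is continuous on `[0,S] × cl Ω × ℝ` and continuously differentiable in the last
variable. -/
def C1InU {n : ℕ} (Ω : Set (Fin n → ℝ)) (S : ℝ) (F : ℝ → (Fin n → ℝ) → ℝ → ℝ) : Prop :=
  ContinuousOn (fun p : ℝ × (Fin n → ℝ) × ℝ => F p.1 p.2.1 p.2.2)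
    (Icc 0 S ×ˢ closure Ω ×ˢ (univ : Set ℝ)) ∧
  (∀ t ∈ Icc 0 S, ∀ x ∈ closure Ω, ∀ u : ℝ, DifferentiableAt ℝ (F t x) u) ∧
  ContinuousOn (fun p : ℝ × (Fin n → ℝ) × ℝ => uDeriv F p.1 p.2.1 p.2.2)
    (Icc 0 S ×ˢ closure Ω ×ˢ (univ : Set ℝ))

/-- `F` is continuous and twice continuously differentiable in the last variable. -/
def C2InU {n : ℕ} (Ω : Set (Fin n → ℝ)) (S : ℝ) (F : ℝ → (Fin n → ℝ) → ℝ → ℝ) : Prop :=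
  C1InU Ω S F ∧
  (∀ t ∈ Icc 0 S, ∀ x ∈ closure Ω, ∀ u : ℝ, DifferentiableAt ℝ (uDeriv F t x) u) ∧
  ContinuousOn (fun p : ℝ × (Fin n → ℝ) × ℝ => uDeriv2 F p.1 p.2.1 p.2.2)
    (Icc 0 S ×ˢ closure Ω ×ˢ (univ : Set ℝ))

/-- `‖f‖_{W^{1,∞}} ≤ B` on `[0,S] × cl Ω`, stated componentwise: `f`, `∂ₜf` and all `∂ᵢf`
are bounded by `B` in absolute value. -/
def W1infLE {n : ℕ} (Ω : Set (Fin n → ℝ)) (S : ℝ) (f : ℝ → (Fin n → ℝ) → ℝ) (B : ℝ) : Prop :=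
  ∀ t ∈ Icc 0 S, ∀ x ∈ closure Ω,
    |f t x| ≤ B ∧ |timeDeriv f t x| ≤ B ∧ ∀ i, |spatialDeriv f i t x| ≤ B

/-- `f` has bounded continuous first-order derivatives on `[0,S] × cl Ω`. -/
def C1Bounded {n : ℕ} (Ω : Set (Fin n → ℝ)) (S : ℝ) (f : ℝ → (Fin n → ℝ) → ℝ) : Prop :=
  (∀ t ∈ Icc 0 S, ∀ x ∈ closure Ω, DifferentiableAt ℝ (fun s => f s x) t ∧
    ∀ i, DifferentiableAt ℝ (fun s => f t (Function.update x i s)) (x i)) ∧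
  ContinuousOn (fun p : ℝ × (Fin n → ℝ) => f p.1 p.2) (Icc 0 S ×ˢ closure Ω) ∧
  ContinuousOn (fun p : ℝ × (Fin n → ℝ) => timeDeriv f p.1 p.2) (Icc 0 S ×ˢ closure Ω) ∧
  (∀ i, ContinuousOn (fun p : ℝ × (Fin n → ℝ) => spatialDeriv f i p.1 p.2)
    (Icc 0 S ×ˢ closure Ω)) ∧
  ∃ B, W1infLE Ω S f B

/-- Componentwise bound `‖f‖_* ≤ ε` for the parabolic Schauder norm of
`C([0,S];C^{2+α}(cl Ω)) ∩ C^{1+α/2}([0,S];C(cl Ω))`: sup bounds on `f`, `∂ₜf`, spatial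
derivatives up to order 2, the `α`-Hölder (in `x`) seminorms of the second spatial derivatives,
and the `α/2`-Hölder (in `t`) seminorm of `∂ₜf`. -/
def SchauderLE {n : ℕ} (α : ℝ) (Ω : Set (Fin n → ℝ)) (S : ℝ) (f : ℝ → (Fin n → ℝ) → ℝ)
    (ε : ℝ) : Prop :=
  (∀ t ∈ Icc 0 S, ∀ x ∈ closure Ω,
    |f t x| ≤ ε ∧ |timeDeriv f t x| ≤ ε ∧ (∀ i, |spatialDeriv f i t x| ≤ ε) ∧
    ∀ i j, |spatialDeriv2 f i j t x| ≤ ε) ∧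
  (∀ t ∈ Icc 0 S, ∀ x ∈ closure Ω, ∀ x' ∈ closure Ω, ∀ i j,
    |spatialDeriv2 f i j t x - spatialDeriv2 f i j t x'| ≤ ε * dist x x' ^ α) ∧
  (∀ x ∈ closure Ω, ∀ t ∈ Icc 0 S, ∀ t' ∈ Icc 0 S,
    |timeDeriv f t x - timeDeriv f t' x| ≤ ε * |t - t'| ^ (α / 2))

/-- `G`, `∂ₜG` and the `∂_{xᵢ}G` exist and are continuous on `[0,S] × cl Ω × ℝ`. -/
def C1InTX {n : ℕ} (Ω : Set (Fin n → ℝ)) (S : ℝ) (G : ℝ → (Fin n → ℝ) → ℝ → ℝ) : Prop :=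
  (∀ t ∈ Icc 0 S, ∀ x ∈ closure Ω, ∀ u : ℝ,
    DifferentiableAt ℝ (fun s => G s x u) t ∧
    ∀ i, DifferentiableAt ℝ (fun s => G t (Function.update x i s) u) (x i)) ∧
  ContinuousOn (fun p : ℝ × (Fin n → ℝ) × ℝ => G p.1 p.2.1 p.2.2)
    (Icc 0 S ×ˢ closure Ω ×ˢ (univ : Set ℝ)) ∧
  ContinuousOn (fun p : ℝ × (Fin n → ℝ) × ℝ => FtDeriv G p.1 p.2.1 p.2.2)
    (Icc 0 S ×ˢ closure Ω ×ˢ (univ : Set ℝ)) ∧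
  ∀ i, ContinuousOn (fun p : ℝ × (Fin n → ℝ) × ℝ => FxDeriv G i p.1 p.2.1 p.2.2)
    (Icc 0 S ×ˢ closure Ω ×ˢ (univ : Set ℝ))

/-- `G`, `∂ₜG` and the `∂_{xᵢ}G` are bounded by `κ(|u|)` on `[0,S] × cl Ω`, for every `u`. -/
def BoundedByKappa {n : ℕ} (Ω : Set (Fin n → ℝ)) (S : ℝ) (G : ℝ → (Fin n → ℝ) → ℝ → ℝ)
    (κ : ℝ → ℝ) : Prop :=
  ∀ u : ℝ, ∀ t ∈ Icc 0 S, ∀ x ∈ closure Ω,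
    |G t x u| ≤ κ |u| ∧ |FtDeriv G t x u| ≤ κ |u| ∧ ∀ i, |FxDeriv G i t x u| ≤ κ |u|

/-- The family of solutions of the semilinear problem with boundary data `λχ`, together with
its first and second linearizations in the boundary parameter `λ`. -/
structure SemilinearFamily {n : ℕ} (Ω : Set (Fin n → ℝ)) (S r : ℝ)
    (χ : ℝ → (Fin n → ℝ) → ℝ) (F : ℝ → (Fin n → ℝ) → ℝ → ℝ)
    (v v1 v2 : ℝ → ℝ → (Fin n → ℝ) → ℝ) : Prop where
  sol : ∀ lam ∈ Icc (-r) r, IsClassicalSolution Ω S (fun _ _ => (0 : ℝ))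
      (fun t x => -F t x (v lam t x)) (fun t x => lam * χ t x) (v lam)
  zero : ∀ t ∈ Icc 0 S, ∀ x ∈ closure Ω, v 0 t x = 0
  lin1 : ∀ lam ∈ Icc (-r) r, IsClassicalSolution Ω S
      (fun t x => uDeriv F t x (v lam t x)) (fun _ _ => (0 : ℝ)) χ (v1 lam)
  lin2 : ∀ lam ∈ Icc (-r) r, IsClassicalSolution Ω S
      (fun t x => uDeriv F t x (v lam t x))
      (fun t x => -uDeriv2 F t x (v lam t x) * (v1 lam t x) ^ 2) (fun _ _ => (0 : ℝ)) (v2 lam)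
  cont_lam : ∀ t ∈ Icc 0 S, ∀ x ∈ closure Ω, ContinuousOn (fun lam => v lam t x) (Icc (-r) r)
  deriv1 : ∀ t ∈ Icc 0 S, ∀ x ∈ closure Ω, ∀ lam ∈ Ioo (-r) r,
      HasDerivAt (fun μ => v μ t x) (v1 lam t x) lam
  deriv2 : ∀ t ∈ Icc 0 S, ∀ x ∈ closure Ω, ∀ lam ∈ Ioo (-r) r,
      HasDerivAt (fun μ => v1 μ t x) (v2 lam t x) lam

end

end Paper

open Paper Set

namespace Paper

open Filter Topology

lemma lap_eq {n : ℕ} (u : ℝ → (Fin n → ℝ) → ℝ) (t : ℝ) (x : Fin n → ℝ) :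
    laplacian u t x =
      ∑ i, deriv (deriv (fun s => u t (Function.update x i s))) (x i) := by
  unfold laplacian spatialDeriv2 spatialDeriv
  refine Finset.sum_congr rfl fun i _ => ?_
  congr 1
  funext s
  simp

/-- Regularity needed for the maximum principle. -/
structure Reg {n : ℕ} (Ω : Set (Fin n → ℝ)) (a S : ℝ)
    (u : ℝ → (Fin n → ℝ) → ℝ) : Prop where
  cont : ContinuousOn (fun p : ℝ × (Fin n → ℝ) => u p.1 p.2) (Icc a S ×ˢ closure Ω)
  diff_t : ∀ t ∈ Ioo a S, ∀ x ∈ Ω, DifferentiableAt ℝ (fun s => u s x) t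
  diff_x : ∀ t ∈ Ioo a S, ∀ x ∈ Ω, ∀ i,
    DifferentiableAt ℝ (fun s => u t (Function.update x i s)) (x i)
  diff_xx : ∀ t ∈ Ioo a S, ∀ x ∈ Ω, ∀ i,
    DifferentiableAt ℝ (deriv (fun s => u t (Function.update x i s))) (x i)

lemma ParabolicRegular.reg {n : ℕ} {Ω : Set (Fin n → ℝ)} {S : ℝ}
    {u : ℝ → (Fin n → ℝ) → ℝ} (h : ParabolicRegular Ω S u) {a : ℝ} (ha : 0 ≤ a) :
    Reg Ω a S u where
  cont := h.cont.mono (prod_mono (Icc_subset_Icc_left ha) le_rfl)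
  diff_t t ht x hx := h.diff_t t ⟨ha.trans_lt ht.1, ht.2⟩ x hx
  diff_x t ht x hx i := h.diff_x t ⟨ha.trans_lt ht.1, ht.2⟩ x hx i
  diff_xx t ht x hx i := by
    have := h.diff_xx t ⟨ha.trans_lt ht.1, ht.2⟩ x hx i i
    unfold spatialDeriv at this
    simpa using this

lemma eventually_update {n : ℕ} {Ω : Set (Fin n → ℝ)} (hΩo : IsOpen Ω) {x : Fin n → ℝ}
    (hx : x ∈ Ω) (i : Fin n) : ∀ᶠ s in 𝓝 (x i), Function.update x i s ∈ Ω := by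
  have hc : Continuous (fun s : ℝ => Function.update x i s) := by fun_prop
  apply hc.continuousAt.eventually_mem
  simpa using hΩo.mem_nhds hx

lemma Reg.eventually_diff {n : ℕ} {Ω : Set (Fin n → ℝ)} (hΩo : IsOpen Ω) {a S : ℝ}
    {u : ℝ → (Fin n → ℝ) → ℝ} (hu : Reg Ω a S u) {t : ℝ} (ht : t ∈ Ioo a S)
    {x : Fin n → ℝ} (hx : x ∈ Ω) (i : Fin n) :
    ∀ᶠ s in 𝓝 (x i), DifferentiableAt ℝ (fun s => u t (Function.update x i s)) s := by
  filter_upwards [eventually_update hΩo hx i] with s hs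
  simpa using hu.diff_x t ht _ hs i

lemma Reg.deriv_sub_eq {n : ℕ} {Ω : Set (Fin n → ℝ)} (hΩo : IsOpen Ω) {a S : ℝ}
    {u w : ℝ → (Fin n → ℝ) → ℝ} (hu : Reg Ω a S u) (hw : Reg Ω a S w) (c : ℝ)
    {t : ℝ} (ht : t ∈ Ioo a S)
    {x : Fin n → ℝ} (hx : x ∈ Ω) (i : Fin n) :
    deriv (fun s => u t (Function.update x i s) - c * w t (Function.update x i s)) =ᶠ[𝓝 (x i)]
      fun s => deriv (fun s => u t (Function.update x i s)) s -
        c * deriv (fun s => w t (Function.update x i s)) s := by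
  filter_upwards [hu.eventually_diff hΩo ht hx i, hw.eventually_diff hΩo ht hx i] with s h1 h2
  exact (h1.hasDerivAt.sub (h2.hasDerivAt.const_mul c)).deriv

lemma Reg.sub {n : ℕ} {Ω : Set (Fin n → ℝ)} (hΩo : IsOpen Ω) {a S : ℝ}
    {u w : ℝ → (Fin n → ℝ) → ℝ} (hu : Reg Ω a S u) (hw : Reg Ω a S w) (c : ℝ) :
    Reg Ω a S (fun t x => u t x - c * w t x) where
  cont := hu.cont.sub (hw.cont.const_smul c)
  diff_t t ht x hx := (hu.diff_t t ht x hx).sub ((hw.diff_t t ht x hx).const_mul c)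
  diff_x t ht x hx i := (hu.diff_x t ht x hx i).sub ((hw.diff_x t ht x hx i).const_mul c)
  diff_xx t ht x hx i := by
    rw [(hu.deriv_sub_eq hΩo hw c ht hx i).differentiableAt_iff]
    exact (hu.diff_xx t ht x hx i).sub ((hw.diff_xx t ht x hx i).const_mul c)

lemma Reg.time_sub {n : ℕ} {Ω : Set (Fin n → ℝ)} {a S : ℝ}
    {u w : ℝ → (Fin n → ℝ) → ℝ} (hu : Reg Ω a S u) (hw : Reg Ω a S w) (c : ℝ)
    {t : ℝ} (ht : t ∈ Ioo a S) {x : Fin n → ℝ} (hx : x ∈ Ω) :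
    timeDeriv (fun t x => u t x - c * w t x) t x = timeDeriv u t x - c * timeDeriv w t x :=
  ((hu.diff_t t ht x hx).hasDerivAt.sub ((hw.diff_t t ht x hx).hasDerivAt.const_mul c)).deriv

lemma Reg.lap_sub {n : ℕ} {Ω : Set (Fin n → ℝ)} (hΩo : IsOpen Ω) {a S : ℝ}
    {u w : ℝ → (Fin n → ℝ) → ℝ} (hu : Reg Ω a S u) (hw : Reg Ω a S w) (c : ℝ)
    {t : ℝ} (ht : t ∈ Ioo a S) {x : Fin n → ℝ} (hx : x ∈ Ω) :
    laplacian (fun t x => u t x - c * w t x) t x = laplacian u t x - c * laplacian w t x := by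
  simp only [lap_eq]
  rw [Finset.mul_sum, ← Finset.sum_sub_distrib]
  refine Finset.sum_congr rfl fun i _ => ?_
  rw [(hu.deriv_sub_eq hΩo hw c ht hx i).deriv_eq]
  exact ((hu.diff_xx t ht x hx i).hasDerivAt.sub
    ((hw.diff_xx t ht x hx i).hasDerivAt.const_mul c)).deriv

lemma second_deriv_nonneg {f : ℝ → ℝ} {x : ℝ} (hf : IsLocalMin f x) (hc : ContinuousAt f x) :
    0 ≤ deriv (deriv f) x := by
  by_contra! h
  have hM := isLocalMax_of_deriv_deriv_neg h hf.deriv_eq_zero hc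
  have : f =ᶠ[𝓝 x] fun _ => f x := by
    filter_upwards [hf, hM] with y h1 h2
    exact le_antisymm h2 h1
  have h2 : deriv f =ᶠ[𝓝 x] deriv (fun _ => f x) := this.deriv
  rw [h2.deriv_eq] at h
  simp at h

lemma left_deriv_nonpos {g : ℝ → ℝ} {g' t a : ℝ} (hg : HasDerivAt g g' t) (ha : a < t)
    (h : ∀ s ∈ Icc a t, g t ≤ g s) : g' ≤ 0 := by
  have h1 := (hasDerivAt_iff_tendsto_slope_left_right.1 hg).1
  refine le_of_tendsto h1 ?_
  filter_upwards [Ioo_mem_nhdsLT ha] with s hs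
  rw [slope_def_field]
  exact div_nonpos_of_nonneg_of_nonpos (sub_nonneg.2 (h s ⟨hs.1.le, hs.2.le⟩))
    (sub_nonpos.2 hs.2.le)

/-- Weak parabolic minimum principle. -/
lemma min_principle {n : ℕ} {Ω : Set (Fin n → ℝ)} (hΩo : IsOpen Ω)
    (hΩb : Bornology.IsBounded Ω) {a S K : ℝ} {z : ℝ → (Fin n → ℝ) → ℝ} (haS : a < S)
    (hz : Reg Ω a S z)
    (hpde : ∀ t ∈ Ioo a S, ∀ x ∈ Ω, z t x < 0 → K * z t x ≤ timeDeriv z t x - laplacian z t x)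
    (hlat : ∀ t ∈ Icc a S, ∀ x ∈ frontier Ω, 0 ≤ z t x)
    (hini : ∀ x ∈ closure Ω, 0 ≤ z a x) :
    ∀ t ∈ Icc a S, ∀ x ∈ closure Ω, 0 ≤ z t x := by
  have hcl : IsCompact (closure Ω) := hΩb.isCompact_closure
  have key : ∀ t ∈ Ico a S, ∀ x ∈ closure Ω, 0 ≤ z t x := by
    intro T hT x hx
    by_contra! hneg
    have hcomp : IsCompact (Icc a T ×ˢ closure Ω) := isCompact_Icc.prod hcl
    have hsub : Icc a T ×ˢ closure Ω ⊆ Icc a S ×ˢ closure Ω :=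
      prod_mono (Icc_subset_Icc_right hT.2.le) le_rfl
    have hcont : ContinuousOn (fun p : ℝ × (Fin n → ℝ) =>
        Real.exp (-(K + 1) * p.1) * z p.1 p.2) (Icc a T ×ˢ closure Ω) :=
      ContinuousOn.mul (by fun_prop) (hz.cont.mono hsub)
    obtain ⟨⟨t1, x1⟩, ⟨ht1, hx1⟩, hmin⟩ := hcomp.exists_isMinOn
      ⟨(T, x), ⟨⟨hT.1, le_rfl⟩, hx⟩⟩ hcont
    simp only at ht1 hx1
    have hle : ∀ t ∈ Icc a T, ∀ x ∈ closure Ω,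
        Real.exp (-(K + 1) * t1) * z t1 x1 ≤ Real.exp (-(K + 1) * t) * z t x :=
      fun t ht x hx => isMinOn_iff.1 hmin (t, x) ⟨ht, hx⟩
    have hz1 : z t1 x1 < 0 := by
      have h1 := hle T ⟨hT.1, le_rfl⟩ x hx
      have h2 : Real.exp (-(K + 1) * T) * z T x < 0 := mul_neg_of_pos_of_neg (Real.exp_pos _) hneg
      by_contra! h3
      have := mul_nonneg (Real.exp_pos (-(K + 1) * t1)).le h3
      linarith
    have hx1Ω : x1 ∈ Ω := by
      by_contra hn
      have : x1 ∈ frontier Ω := by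
        rw [hΩo.frontier_eq]; exact ⟨hx1, hn⟩
      exact absurd (hlat t1 ⟨ht1.1, ht1.2.trans hT.2.le⟩ x1 this) (not_le.2 hz1)
    have hat : a < t1 := by
      rcases ht1.1.eq_or_lt with h | h
      · rw [← h] at hz1
        exact absurd (hini x1 hx1) (not_le.2 hz1)
      · exact h
    have ht1' : t1 ∈ Ioo a S := ⟨hat, ht1.2.trans_lt hT.2⟩
    have htime : timeDeriv z t1 x1 ≤ (K + 1) * z t1 x1 := by
      have hd := (hz.diff_t t1 ht1' x1 hx1Ω).hasDerivAt
      have he : HasDerivAt (fun s : ℝ => Real.exp (-(K + 1) * s))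
          (Real.exp (-(K + 1) * t1) * (-(K + 1) * 1)) t1 :=
        ((hasDerivAt_id t1).const_mul _).exp
      have := left_deriv_nonpos (he.mul hd) hat
        (fun s hs => hle s ⟨hs.1, hs.2.trans ht1.2⟩ x1 hx1)
      have h3 : Real.exp (-(K + 1) * t1) * (timeDeriv z t1 x1 - (K + 1) * z t1 x1) ≤ 0 := by
        unfold timeDeriv
        linarith
      have := nonpos_of_mul_nonpos_right h3 (Real.exp_pos _)
      linarith
    have hlap : 0 ≤ laplacian z t1 x1 := by
      rw [lap_eq]
      refine Finset.sum_nonneg fun i _ => second_deriv_nonneg ?_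
        (hz.diff_x t1 ht1' x1 hx1Ω i).continuousAt
      filter_upwards [eventually_update hΩo hx1Ω i] with s hs
      have := hle t1 ht1 _ (subset_closure hs)
      simpa using le_of_mul_le_mul_left this (Real.exp_pos _)
    have := hpde t1 ht1' x1 hx1Ω hz1
    linarith
  intro t ht x hx
  rcases ht.2.eq_or_lt with h | h
  · subst h
    have hc : ContinuousOn (fun s => z s x) (Icc a t) :=
      hz.cont.comp (f := fun s => (s, x)) (by fun_prop) (fun s hs => ⟨hs, hx⟩)
    have h1 : Tendsto (fun s => z s x) (𝓝[Ico a t] t) (𝓝 (z t x)) :=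
      (hc t ht).mono Ico_subset_Icc_self
    have : (𝓝[Ico a t] t).NeBot := by
      rw [← mem_closure_iff_nhdsWithin_neBot, closure_Ico haS.ne]; exact ht
    exact ge_of_tendsto h1 (eventually_mem_nhdsWithin.mono fun s hs => key s hs x hx)
  · exact key t ⟨ht.1, h⟩ x hx

end Paper

namespace Paper

open Filter Topology

/-- One-dimensional barrier. -/
noncomputable def barr (a L t s : ℝ) : ℝ := expNegInvGlue ((t - a) / (s + L) ^ 2)

lemma barr_eq {a L t s : ℝ} (ht : a < t) (hs : 0 < s + L) :
    barr a L t s = Real.exp (-((s + L) ^ 2 / (t - a))) := by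
  have h : 0 < (t - a) / (s + L) ^ 2 := div_pos (sub_pos.2 ht) (by positivity)
  unfold barr expNegInvGlue
  rw [if_neg (not_le.2 h), inv_div]

lemma barr_t {a L t s : ℝ} (ht : a < t) (hs : 0 < s + L) :
    HasDerivAt (fun t => barr a L t s)
      (Real.exp (-((s + L) ^ 2 / (t - a))) * ((s + L) ^ 2 / (t - a) ^ 2)) t := by
  have hne : t - a ≠ 0 := (sub_pos.2 ht).ne'
  have h1 : HasDerivAt (fun t => Real.exp (-((s + L) ^ 2 / (t - a))))
      (Real.exp (-((s + L) ^ 2 / (t - a))) *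
        (-((0 * (t - a) - (s + L) ^ 2 * 1) / (t - a) ^ 2))) t :=
    ((((hasDerivAt_const t ((s + L) ^ 2)).div ((hasDerivAt_id t).sub_const a) hne)).neg).exp
  have h2 := h1.congr_of_eventuallyEq (f₁ := fun t => barr a L t s) (by
    filter_upwards [Ioi_mem_nhds ht] with t' ht'
    exact barr_eq ht' hs)
  exact h2.congr_deriv (by ring)

lemma barr_s {a L t s : ℝ} (ht : a < t) (hs : 0 < s + L) :
    HasDerivAt (fun s => barr a L t s)
      (Real.exp (-((s + L) ^ 2 / (t - a))) * (-(2 * (s + L) / (t - a)))) s := by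
  have h1 : HasDerivAt (fun s => Real.exp (-((s + L) ^ 2 / (t - a))))
      (Real.exp (-((s + L) ^ 2 / (t - a))) *
        (-((2 * (s + L) ^ 1 * 1) / (t - a)))) s :=
    ((((((hasDerivAt_id s).add_const L).pow 2)).div_const (t - a)).neg).exp
  have h2 := h1.congr_of_eventuallyEq (f₁ := fun s => barr a L t s) (by
    filter_upwards [Ioi_mem_nhds (show -L < s by linarith)] with s' hs'
    exact barr_eq ht (by simp only [mem_Ioi] at hs'; linarith))
  exact h2.congr_deriv (by ring)

lemma barr_ss {a L t s : ℝ} (ht : a < t) (hs : 0 < s + L) :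
    HasDerivAt (deriv (fun s => barr a L t s))
      (Real.exp (-((s + L) ^ 2 / (t - a))) * (4 * (s + L) ^ 2 / (t - a) ^ 2 - 2 / (t - a))) s := by
  have h0 : HasDerivAt (fun s => Real.exp (-((s + L) ^ 2 / (t - a))))
      (Real.exp (-((s + L) ^ 2 / (t - a))) *
        (-((2 * (s + L) ^ 1 * 1) / (t - a)))) s :=
    ((((((hasDerivAt_id s).add_const L).pow 2)).div_const (t - a)).neg).exp
  have h1 : HasDerivAt (fun s => -(2 * (s + L) / (t - a))) (-(2 * 1 / (t - a))) s :=
    ((((hasDerivAt_id s).add_const L).const_mul 2).div_const (t - a)).neg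
  have h2 := (h0.mul h1).congr_of_eventuallyEq (f₁ := deriv (fun s => barr a L t s)) (by
    filter_upwards [Ioi_mem_nhds (show -L < s by linarith)] with s' hs'
    exact (barr_s ht (by simp only [mem_Ioi] at hs'; linarith)).deriv)
  have hne : t - a ≠ 0 := (sub_pos.2 ht).ne'
  refine h2.congr_deriv ?_
  field_simp
  ring

lemma exists_barrier {n : ℕ} (i0 : Fin n) {Ω : Set (Fin n → ℝ)}
    (hΩb : Bornology.IsBounded Ω) {a S κ : ℝ} (haS : a < S) (hκ : 0 ≤ κ) :
    ∃ w : ℝ → (Fin n → ℝ) → ℝ, Reg Ω a S w ∧ (∀ t x, w t x ≤ 1) ∧ (∀ x, w a x = 0) ∧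
      (∀ t, a < t → ∀ x ∈ closure Ω, 0 < w t x) ∧
      ∀ t ∈ Ioo a S, ∀ x ∈ Ω, timeDeriv w t x - laplacian w t x ≤ -κ * w t x := by
  obtain ⟨R, hR⟩ := hΩb.closure.exists_norm_le
  set T := S - a with hTdef
  have hT : 0 < T := sub_pos.2 haS
  set D := 1 + 2 * T + κ * T ^ 2 with hD
  have hκT : 0 ≤ κ * T ^ 2 := by positivity
  have hD1 : 1 ≤ D := by linarith
  have hpos : ∀ x ∈ closure Ω, D ≤ x i0 + (R + D) := by
    intro x hx
    have h1 := (norm_le_pi_norm x i0).trans (hR x hx)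
    rw [Real.norm_eq_abs] at h1
    linarith [neg_abs_le (x i0)]
  have hpos' : ∀ x ∈ closure Ω, 0 < x i0 + (R + D) := fun x hx => by linarith [hpos x hx]
  have hcase : ∀ (t : ℝ) (x : Fin n → ℝ) (i : Fin n), i ≠ i0 →
      (fun s => barr a (R + D) t (Function.update x i s i0)) =
        fun _ => barr a (R + D) t (x i0) := by
    intro t x i hi
    funext s
    rw [Function.update_of_ne hi.symm]
  have hcase0 : ∀ (t : ℝ) (x : Fin n → ℝ),
      (fun s => barr a (R + D) t (Function.update x i0 s i0)) =
        fun s => barr a (R + D) t s := by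
    intro t x
    funext s
    simp
  refine ⟨fun t x => barr a (R + D) t (x i0), ⟨?_, ?_, ?_, ?_⟩, ?_, ?_, ?_, ?_⟩
  · unfold barr
    have hg : Continuous expNegInvGlue := (expNegInvGlue.contDiff (n := 0)).continuous
    apply hg.comp_continuousOn
    apply ContinuousOn.div (by fun_prop) (by fun_prop)
    rintro ⟨t, x⟩ ⟨_, hx⟩
    have := hpos' x hx
    positivity
  · intro t ht x hx
    exact (barr_t ht.1 (hpos' x (subset_closure hx))).differentiableAt
  · intro t ht x hx i
    by_cases hi : i = i0
    · subst hi
      simp only [hcase0]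
      exact (barr_s ht.1 (hpos' x (subset_closure hx))).differentiableAt
    · simp only [hcase t x i hi]
      fun_prop
  · intro t ht x hx i
    by_cases hi : i = i0
    · subst hi
      simp only [hcase0]
      exact (barr_ss ht.1 (hpos' x (subset_closure hx))).differentiableAt
    · simp only [hcase t x i hi]
      simp
  · intro t x
    simp only [barr, expNegInvGlue]
    split_ifs with h
    · norm_num
    · rw [Real.exp_le_one_iff]
      push Not at h
      have := inv_pos.2 h
      linarith
  · intro x
    simp [barr]
  · intro t ht x hx
    have := hpos' x hx
    exact expNegInvGlue.pos_of_pos (div_pos (sub_pos.2 ht) (by positivity))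
  · intro t ht x hx
    have hx' := hpos' x (subset_closure hx)
    have hxD := hpos x (subset_closure hx)
    rw [lap_eq, Finset.sum_eq_single i0]
    · simp only [hcase0]
      rw [(barr_ss ht.1 hx').deriv, barr_eq ht.1 hx']
      unfold timeDeriv
      rw [(barr_t ht.1 hx').deriv]
      set q := x i0 + (R + D)
      set E := Real.exp (-(q ^ 2 / (t - a)))
      have hE : 0 < E := Real.exp_pos _
      have hτ : 0 < t - a := sub_pos.2 ht.1
      have hτT : t - a ≤ T := by linarith [ht.2]
      have hq : D ≤ q ^ 2 := by nlinarith
      have hk : κ * (t - a) ^ 2 ≤ κ * T ^ 2 := by gcongr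
      have : q ^ 2 / (t - a) ^ 2 - (4 * q ^ 2 / (t - a) ^ 2 - 2 / (t - a)) ≤ -κ := by
        have h1 : q ^ 2 / (t - a) ^ 2 - (4 * q ^ 2 / (t - a) ^ 2 - 2 / (t - a)) =
            (2 * (t - a) - 3 * q ^ 2) / (t - a) ^ 2 := by
          field_simp
          ring
        rw [h1, div_le_iff₀ (by positivity)]
        linarith
      nlinarith [mul_le_mul_of_nonneg_left this hE.le]
    · intro i _ hi
      simp only [hcase t x i hi]
      simp
    · simp

lemma y_pos {n : ℕ} (i0 : Fin n) {Ω : Set (Fin n → ℝ)} (hΩo : IsOpen Ω)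
    (hΩb : Bornology.IsBounded Ω)
    {S δ₁ δ₂ κ₀ : ℝ} (hS : 0 < S) (hδ₁ : 0 < δ₁) (hδ₁S : δ₁ < S) (hδ₂ : 0 < δ₂)
    (hκ₀ : 0 ≤ κ₀)
    {χ : ℝ → (Fin n → ℝ) → ℝ}
    (hχc : ContinuousOn (fun p : ℝ × (Fin n → ℝ) => χ p.1 p.2) (Icc 0 S ×ˢ frontier Ω))
    (hχ0 : ∀ t ∈ Icc 0 S, ∀ x ∈ frontier Ω, 0 ≤ χ t x)
    (hχδ : ∀ t ∈ Icc δ₁ S, ∀ x ∈ frontier Ω, χ t x = δ₂)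
    {y : ℝ → (Fin n → ℝ) → ℝ}
    (hy : IsClassicalSolution Ω S (fun _ _ => κ₀) (fun _ _ => (0 : ℝ)) χ y) :
    ∀ t ∈ Icc δ₁ S, ∀ x ∈ closure Ω, 0 < y t x := by
  have hy0 : ∀ t ∈ Icc 0 S, ∀ x ∈ closure Ω, 0 ≤ y t x := by
    refine min_principle (K := 0) hΩo hΩb hS (hy.toParabolicRegular.reg le_rfl) ?_ ?_ ?_
    · intro t ht x hx hneg
      have := hy.eqn t ht x hx
      nlinarith
    · intro t ht x hx
      rw [hy.lateral t ht x hx]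
      exact hχ0 t ht x hx
    · intro x hx
      rw [hy.initial x hx]
  obtain ⟨a, ha0, haδ, hχa⟩ : ∃ a, 0 ≤ a ∧ a < δ₁ ∧
      ∀ t ∈ Icc a S, ∀ x ∈ frontier Ω, δ₂ / 2 ≤ χ t x := by
    have hfc : IsCompact (frontier Ω) :=
      hΩb.isCompact_closure.of_isClosed_subset isClosed_frontier frontier_subset_closure
    have huc := (isCompact_Icc.prod hfc).uniformContinuousOn_of_continuous hχc
    rw [Metric.uniformContinuousOn_iff] at huc
    obtain ⟨ε, hε, h⟩ := huc (δ₂ / 2) (by linarith)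
    refine ⟨max 0 (δ₁ - ε / 2), le_max_left _ _, max_lt hδ₁ (by linarith), ?_⟩
    intro t ht x hx
    rcases le_or_gt δ₁ t with h1 | h1
    · rw [hχδ t ⟨h1, ht.2⟩ x hx]; linarith
    · have ht0 : 0 ≤ t := (le_max_left _ _).trans ht.1
      have ht1 : δ₁ - ε / 2 ≤ t := (le_max_right _ _).trans ht.1
      have := h (t, x) ⟨⟨ht0, ht.2⟩, hx⟩ (δ₁, x) ⟨⟨hδ₁.le, hδ₁S.le⟩, hx⟩ (by
        rw [dist_prod_same_right, Real.dist_eq, abs_lt]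
        constructor <;> linarith)
      rw [hχδ δ₁ ⟨le_rfl, hδ₁S.le⟩ x hx, Real.dist_eq, abs_lt] at this
      linarith [this.1]
  have haS : a < S := haδ.trans hδ₁S
  obtain ⟨w, hw, hw1, hwa, hwpos, hwpde⟩ := exists_barrier i0 hΩb haS hκ₀
  have hyr := hy.toParabolicRegular.reg ha0
  have hz : ∀ t ∈ Icc a S, ∀ x ∈ closure Ω, 0 ≤ y t x - (δ₂ / 2) * w t x := by
    refine min_principle (K := 0) hΩo hΩb haS (hyr.sub hΩo hw (δ₂ / 2)) ?_ ?_ ?_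
    · intro t ht x hx hneg
      rw [hyr.time_sub hw _ ht hx, hyr.lap_sub hΩo hw _ ht hx]
      have h1 := hy.eqn t ⟨ha0.trans_lt ht.1, ht.2⟩ x hx
      have h2 := mul_le_mul_of_nonneg_left (hwpde t ht x hx) (show 0 ≤ δ₂ / 2 by linarith)
      nlinarith
    · intro t ht x hx
      rw [hy.lateral t ⟨ha0.trans ht.1, ht.2⟩ x hx]
      nlinarith [hχa t ht x hx, hw1 t x]
    · intro x hx
      rw [hwa]
      simpa using hy0 a ⟨ha0, haS.le⟩ x hx
  intro t ht x hx
  have h1 := hz t ⟨haδ.le.trans ht.1, ht.2⟩ x hx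
  have h2 := hwpos t (haδ.trans_le ht.1) x hx
  have : 0 < δ₂ / 2 * w t x := by positivity
  linarith

/-- Comparison of a nonlinear solution with `r y`. -/
lemma compare {n : ℕ} {Ω : Set (Fin n → ℝ)} (hΩo : IsOpen Ω)
    (hΩb : Bornology.IsBounded Ω) {S r κ₀ K : ℝ} (hS : 0 < S) (hr : 0 < r) (hκ₀ : 0 ≤ κ₀)
    {χ : ℝ → (Fin n → ℝ) → ℝ}
    (hχ0 : ∀ t ∈ Icc 0 S, ∀ x ∈ frontier Ω, 0 ≤ χ t x)
    {y u : ℝ → (Fin n → ℝ) → ℝ}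
    (hy : IsClassicalSolution Ω S (fun _ _ => κ₀) (fun _ _ => (0 : ℝ)) χ y)
    (hu : Reg Ω 0 S u)
    (h1 : ∀ t ∈ Ioo 0 S, ∀ x ∈ Ω, u t x < 0 → K * u t x ≤ timeDeriv u t x - laplacian u t x)
    (h2 : ∀ t ∈ Ioo 0 S, ∀ x ∈ Ω, 0 ≤ u t x →
      -κ₀ * u t x ≤ timeDeriv u t x - laplacian u t x)
    (hlat : ∀ t ∈ Icc 0 S, ∀ x ∈ frontier Ω, u t x = r * χ t x)
    (hini : ∀ x ∈ closure Ω, u 0 x = 0) :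
    ∀ t ∈ Icc 0 S, ∀ x ∈ closure Ω, r * y t x ≤ u t x := by
  have hu0 : ∀ t ∈ Icc 0 S, ∀ x ∈ closure Ω, 0 ≤ u t x := by
    refine min_principle hΩo hΩb hS hu h1 ?_ ?_
    · intro t ht x hx
      rw [hlat t ht x hx]
      exact mul_nonneg hr.le (hχ0 t ht x hx)
    · intro x hx
      rw [hini x hx]
  have hyr := hy.toParabolicRegular.reg le_rfl
  have hz : ∀ t ∈ Icc 0 S, ∀ x ∈ closure Ω, 0 ≤ u t x - r * y t x := by
    refine min_principle (K := 0) hΩo hΩb hS (hu.sub hΩo hyr r) ?_ ?_ ?_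
    · intro t ht x hx hneg
      rw [hu.time_sub hyr _ ht hx, hu.lap_sub hΩo hyr _ ht hx]
      have h3 := hy.eqn t ht x hx
      have h4 := h2 t ht x hx (hu0 t ⟨ht.1.le, ht.2.le⟩ x (subset_closure hx))
      have h5 : timeDeriv y t x - laplacian y t x = - κ₀ * y t x := by linarith
      have h6 : r * timeDeriv y t x - r * laplacian y t x = r * (- κ₀ * y t x) := by
        rw [← h5]; ring
      nlinarith
    · intro t ht x hx
      rw [hlat t ht x hx, hy.lateral t ht x hx]
      simp
    · intro x hx
      rw [hini x hx, hy.initial x hx]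
      simp
  intro t ht x hx
  linarith [hz t ht x hx]

lemma uDeriv_le {n : ℕ} {Ω : Set (Fin n → ℝ)} {S κ₀ : ℝ}
    {F : ℝ → (Fin n → ℝ) → ℝ → ℝ} (hF : C2InU Ω S F)
    (hFconc : ∀ t ∈ Icc 0 S, ∀ x ∈ closure Ω,
      (∀ u : ℝ, 0 ≤ u → uDeriv2 F t x u ≤ 0) ∧ (∀ u : ℝ, u ≤ 0 → 0 ≤ uDeriv2 F t x u))
    (hFκ : ∀ t ∈ Icc 0 S, ∀ x ∈ closure Ω, uDeriv F t x 0 ≤ κ₀)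
    {t : ℝ} (ht : t ∈ Icc 0 S) {x : Fin n → ℝ} (hx : x ∈ closure Ω) (u : ℝ) :
    uDeriv F t x u ≤ κ₀ := by
  have hd : Differentiable ℝ (uDeriv F t x) := fun u => hF.2.1 t ht x hx u
  refine le_trans ?_ (hFκ t ht x hx)
  rcases le_total 0 u with h | h
  · have := antitoneOn_of_deriv_nonpos (convex_Ici (0 : ℝ)) hd.continuous.continuousOn
      hd.differentiableOn (fun s hs => (hFconc t ht x hx).1 s (interior_subset hs))
    exact this (by simp) h h
  · have := monotoneOn_of_deriv_nonneg (convex_Iic (0 : ℝ)) hd.continuous.continuousOn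
      hd.differentiableOn (fun s hs => (hFconc t ht x hx).2 s
        (mem_Iic.1 (interior_subset (s := Iic (0 : ℝ)) hs)))
    exact this h (by simp) h

lemma exists_lower {n : ℕ} {Ω : Set (Fin n → ℝ)} (hΩb : Bornology.IsBounded Ω) {S : ℝ}
    {F : ℝ → (Fin n → ℝ) → ℝ → ℝ} (hF : C2InU Ω S F)
    {u : ℝ → (Fin n → ℝ) → ℝ}
    (hu : ContinuousOn (fun p : ℝ × (Fin n → ℝ) => u p.1 p.2) (Icc 0 S ×ˢ closure Ω)) :
    ∃ K, ∀ t ∈ Icc 0 S, ∀ x ∈ closure Ω, ∀ s, |s| ≤ |u t x| → -K ≤ uDeriv F t x s := by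
  have hc := (isCompact_Icc (a := (0:ℝ)) (b := S)).prod hΩb.isCompact_closure
  obtain ⟨M, hM⟩ := hc.exists_bound_of_continuousOn hu
  have hc2 := (isCompact_Icc (a := (0:ℝ)) (b := S)).prod
    (hΩb.isCompact_closure.prod (isCompact_Icc (a := -M) (b := M)))
  obtain ⟨K, hK⟩ := hc2.exists_bound_of_continuousOn (hF.1.2.2.mono
    (prod_mono le_rfl (prod_mono le_rfl (subset_univ _))))
  refine ⟨K, fun t ht x hx s hs => ?_⟩
  have h1 := hM (t, x) ⟨ht, hx⟩
  have h2 := hK (t, x, s) ⟨ht, hx, abs_le.1 (hs.trans h1)⟩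
  exact (abs_le.1 h2).1

end Paper
/-- Lemma 3.1 of the paper: with the constant potential `κ₀` and `y` the
corresponding solution with boundary data `χ`, the constant `a₂ := inf_{[δ₁,S] × cl Ω} y` is
strictly positive and the family `v_λ` attains every value of `[−a₂r, a₂r]` at every point of
`(δ₁,S) × Ω`. -/
theorem statement8 {n : ℕ} (hn : 2 ≤ n) (Ω : Set (Fin n → ℝ)) (hΩo : IsOpen Ω)
    (hΩb : Bornology.IsBounded Ω) (hΩc : IsConnected Ω)
    (S δ₁ δ₂ r κ₀ : ℝ) (hS : 0 < S) (hδ₁ : 0 < δ₁) (hδ₁S : δ₁ < S) (hδ₂ : 0 < δ₂)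
    (hr : 0 < r) (hκ₀ : 0 ≤ κ₀)
    (χ : ℝ → (Fin n → ℝ) → ℝ)
    (hχc : ContinuousOn (fun p : ℝ × (Fin n → ℝ) => χ p.1 p.2) (Icc 0 S ×ˢ frontier Ω))
    (hχ0 : ∀ t ∈ Icc 0 S, ∀ x ∈ frontier Ω, 0 ≤ χ t x)
    (hχδ : ∀ t ∈ Icc δ₁ S, ∀ x ∈ frontier Ω, χ t x = δ₂)
    (F : ℝ → (Fin n → ℝ) → ℝ → ℝ) (hF : C2InU Ω S F)
    (hF0 : ∀ t ∈ Icc 0 S, ∀ x ∈ closure Ω, F t x 0 = 0)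
    (hFconc : ∀ t ∈ Icc 0 S, ∀ x ∈ closure Ω,
      (∀ u : ℝ, 0 ≤ u → uDeriv2 F t x u ≤ 0) ∧ (∀ u : ℝ, u ≤ 0 → 0 ≤ uDeriv2 F t x u))
    (hFκ : ∀ t ∈ Icc 0 S, ∀ x ∈ closure Ω, uDeriv F t x 0 ≤ κ₀)
    (v v1 v2 : ℝ → ℝ → (Fin n → ℝ) → ℝ)
    (hfam : SemilinearFamily Ω S r χ F v v1 v2)
    (y : ℝ → (Fin n → ℝ) → ℝ)
    (hy : IsClassicalSolution Ω S (fun _ _ => κ₀) (fun _ _ => (0 : ℝ)) χ y) :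
    0 < sInf ((fun p : ℝ × (Fin n → ℝ) => y p.1 p.2) '' (Icc δ₁ S ×ˢ closure Ω)) ∧
    ∀ t ∈ Ioo δ₁ S, ∀ x ∈ Ω,
      ∀ s ∈ Icc (-(sInf ((fun p : ℝ × (Fin n → ℝ) => y p.1 p.2) ''
            (Icc δ₁ S ×ˢ closure Ω)) * r))
          (sInf ((fun p : ℝ × (Fin n → ℝ) => y p.1 p.2) '' (Icc δ₁ S ×ˢ closure Ω)) * r),
        ∃ lam ∈ Icc (-r) r, v lam t x = s := by
  have hcomp : IsCompact ((fun p : ℝ × (Fin n → ℝ) => y p.1 p.2) '' (Icc δ₁ S ×ˢ closure Ω)) :=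
    (isCompact_Icc.prod hΩb.isCompact_closure).image_of_continuousOn
      (hy.cont.mono (prod_mono (Icc_subset_Icc_left hδ₁.le) le_rfl))
  have hne : ((fun p : ℝ × (Fin n → ℝ) => y p.1 p.2) '' (Icc δ₁ S ×ˢ closure Ω)).Nonempty := by
    obtain ⟨x, hx⟩ := hΩc.nonempty
    exact ⟨_, (δ₁, x), ⟨⟨le_rfl, hδ₁S.le⟩, subset_closure hx⟩, rfl⟩
  have hyp := y_pos ⟨0, by omega⟩ hΩo hΩb hS hδ₁ hδ₁S hδ₂ hκ₀ hχc hχ0 hχδ hy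
  refine ⟨?_, ?_⟩
  · obtain ⟨⟨t, x⟩, ⟨ht, hx⟩, h⟩ := hcomp.sInf_mem hne
    rw [← h]
    exact hyp t ht x hx
  intro t ht x hx
  have hle : sInf ((fun p : ℝ × (Fin n → ℝ) => y p.1 p.2) '' (Icc δ₁ S ×ˢ closure Ω)) ≤ y t x :=
    csInf_le hcomp.bddBelow ⟨(t, x), ⟨⟨ht.1.le, ht.2.le⟩, subset_closure hx⟩, rfl⟩
  set a₂ := sInf ((fun p : ℝ × (Fin n → ℝ) => y p.1 p.2) '' (Icc δ₁ S ×ˢ closure Ω))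
  have htS : t ∈ Icc 0 S := ⟨hδ₁.le.trans ht.1.le, ht.2.le⟩
  have hrr : r ∈ Icc (-r) r := ⟨by linarith, le_rfl⟩
  have hrm : -r ∈ Icc (-r) r := ⟨le_rfl, by linarith⟩
  have hdF : ∀ t ∈ Icc 0 S, ∀ x ∈ closure Ω, Differentiable ℝ (F t x) :=
    fun t ht x hx u => hF.1.2.1 t ht x hx u
  -- global upper slope bound
  have hup : ∀ t ∈ Icc 0 S, ∀ x ∈ closure Ω, ∀ p q : ℝ, p ≤ q →
      F t x q - F t x p ≤ κ₀ * (q - p) := by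
    intro t ht x hx p q hpq
    exact convex_univ.image_sub_le_mul_sub_of_deriv_le (hdF t ht x hx).continuous.continuousOn
      (hdF t ht x hx).differentiableOn (fun s _ => uDeriv_le hF hFconc hFκ ht hx s)
      p (mem_univ _) q (mem_univ _) hpq
  have hvr : r * y t x ≤ v r t x := by
    have hsol := hfam.sol r hrr
    obtain ⟨K, hK⟩ := exists_lower hΩb hF hsol.cont
    refine compare (K := K) hΩo hΩb hS hr hκ₀ hχ0 hy (hsol.toParabolicRegular.reg le_rfl)
      ?_ ?_ hsol.lateral hsol.initial t htS x (subset_closure hx)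
    · intro t ht x hx hneg
      have ht' : t ∈ Icc 0 S := ⟨ht.1.le, ht.2.le⟩
      have hx' := subset_closure hx
      have h1 := hsol.eqn t ht x hx
      have h2 := (convex_Icc (v r t x) 0).mul_sub_le_image_sub_of_le_deriv
        (hdF t ht' x hx').continuous.continuousOn
        (hdF t ht' x hx').differentiableOn (C := -K)
        (fun s hs => hK t ht' x hx' s (by
          have := interior_subset hs
          rw [abs_of_neg hneg, abs_of_nonpos this.2]
          linarith [this.1])) _ (left_mem_Icc.2 hneg.le) _ (right_mem_Icc.2 hneg.le) hneg.le
      rw [hF0 t ht' x hx'] at h2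
      linarith
    · intro t ht x hx hnn
      have ht' : t ∈ Icc 0 S := ⟨ht.1.le, ht.2.le⟩
      have h1 := hsol.eqn t ht x hx
      have h2 := hup t ht' x (subset_closure hx) _ _ hnn
      rw [hF0 t ht' x (subset_closure hx)] at h2
      linarith
  have hvm : r * y t x ≤ -v (-r) t x := by
    have hsol := hfam.sol (-r) hrm
    obtain ⟨K, hK⟩ := exists_lower hΩb hF hsol.cont
    have hreg := hsol.toParabolicRegular.reg le_rfl
    have htd : ∀ t x, timeDeriv (fun t x => -v (-r) t x) t x = -timeDeriv (v (-r)) t x := by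
      intro t x
      exact deriv.fun_neg
    have hld : ∀ t x, laplacian (fun t x => -v (-r) t x) t x = -laplacian (v (-r)) t x := by
      intro t x
      rw [lap_eq, lap_eq, ← Finset.sum_neg_distrib]
      refine Finset.sum_congr rfl fun i _ => ?_
      simp
    refine compare (u := fun t x => -v (-r) t x) (K := K) hΩo hΩb hS hr hκ₀ hχ0 hy
      ⟨hreg.cont.neg, fun t ht x hx => (hreg.diff_t t ht x hx).neg,
        fun t ht x hx i => (hreg.diff_x t ht x hx i).neg, fun t ht x hx i => ?_⟩
      ?_ ?_ ?_ ?_ t htS x (subset_closure hx)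
    · simp only [deriv.fun_neg']
      exact (hreg.diff_xx t ht x hx i).neg
    · intro t ht x hx hneg
      have hpos : 0 < v (-r) t x := by linarith
      have ht' : t ∈ Icc 0 S := ⟨ht.1.le, ht.2.le⟩
      have hx' := subset_closure hx
      have h1 := hsol.eqn t ht x hx
      have h2 := (convex_Icc 0 (v (-r) t x)).mul_sub_le_image_sub_of_le_deriv
        (hdF t ht' x hx').continuous.continuousOn
        (hdF t ht' x hx').differentiableOn (C := -K)
        (fun s hs => hK t ht' x hx' s (by
          have := interior_subset hs
          rw [abs_of_pos hpos, abs_of_nonneg this.1]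
          exact this.2)) _ (left_mem_Icc.2 hpos.le) _ (right_mem_Icc.2 hpos.le) hpos.le
      rw [hF0 t ht' x hx'] at h2
      rw [htd, hld]
      linarith
    · intro t ht x hx hnn
      have hnp : v (-r) t x ≤ 0 := by linarith
      have ht' : t ∈ Icc 0 S := ⟨ht.1.le, ht.2.le⟩
      have h1 := hsol.eqn t ht x hx
      have h2 := hup t ht' x (subset_closure hx) _ _ hnp
      rw [hF0 t ht' x (subset_closure hx)] at h2
      rw [htd, hld]
      linarith
    · intro t ht x hx
      have := hsol.lateral t ht x hx
      rw [this]; ring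
    · intro x hx
      have := hsol.initial x hx
      rw [this]; simp
  intro s hs
  have hmul : a₂ * r ≤ r * y t x := by
    rw [mul_comm]; exact mul_le_mul_of_nonneg_left hle hr.le
  exact intermediate_value_Icc (by linarith : -r ≤ r)
    (hfam.cont_lam t htS x (subset_closure hx))
    ⟨by linarith [hs.1], by linarith [hs.2]⟩
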